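/- For every integer n ≥ 3, I(n+1) − I(n) > √(6/π) · 3/(20 n (n+1)) − 4 · (1.1)^{−n} − 0.50344 · n^{−5/2} − 10 e^{−n/6}, where I(n) = (2√n/π) ∫₀^∞ ((sin t)/t)^n dt. -/

import Mathlib

open MeasureTheory Real

/-- `I n = (2√n/π) ∫₀^∞ ((sin t)/t)^n dt`. -/
noncomputable def I (n : ℕ) : ℝ :=
  2 * Real.sqrt n / Real.pi * ∫ t in Set.Ioi (0 : ℝ), (Real.sin t / t) ^ n

lemma nonneg_of_hasDerivAt_nonneg {f f' : ℝ → ℝ} {c : ℝ} (hf : ContinuousOn f (Set.Icc 0 c))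
    (hd : ∀ x ∈ Set.Ioo 0 c, HasDerivAt f (f' x) x) (h0 : 0 ≤ f 0)
    (hpos : ∀ x ∈ Set.Ioo 0 c, 0 ≤ f' x) {x : ℝ} (hx : x ∈ Set.Icc 0 c) : 0 ≤ f x := by
  have hmono : MonotoneOn f (Set.Icc 0 c) := by
    refine monotoneOn_of_deriv_nonneg (convex_Icc 0 c) hf ?_ ?_ <;> rw [interior_Icc]
    · exact fun y hy => (hd y hy).differentiableAt.differentiableWithinAt
    · intro y hy
      rw [(hd y hy).deriv]
      exact hpos y hy
  exact h0.trans (hmono ⟨le_rfl, hx.1.trans hx.2⟩ hx hx.1)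

lemma nonneg_of_hasDerivAt_nonneg' {f f' : ℝ → ℝ} (hd : ∀ x, HasDerivAt f (f' x) x)
    (h0 : 0 ≤ f 0) (hpos : ∀ x, 0 ≤ x → 0 ≤ f' x) {x : ℝ} (hx : 0 ≤ x) : 0 ≤ f x :=
  nonneg_of_hasDerivAt_nonneg (c := x) (fun y _ => (hd y).continuousAt.continuousWithinAt)
    (fun y _ => hd y) h0 (fun y hy => hpos y hy.1.le) ⟨hx, le_rfl⟩

lemma cos_le_taylor_four {x : ℝ} (hx : 0 ≤ x) : cos x ≤ 1 - x ^ 2 / 2 + x ^ 4 / 24 := by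
  have := nonneg_of_hasDerivAt_nonneg' (f := fun x => 1 - x ^ 2 / 2 + x ^ 4 / 24 - cos x)
    (f' := fun x => sin x - (x - x ^ 3 / 6)) (fun y => by
      convert! ((((hasDerivAt_const y (1 : ℝ)).sub ((hasDerivAt_pow 2 y).div_const 2)).add
        ((hasDerivAt_pow 4 y).div_const 24)).sub (hasDerivAt_cos y)) using 1
      norm_num; ring) (by simp)
    (fun y hy => by linarith [sin_ge_sub_cube hy]) hx
  linarith

lemma sin_le_taylor_five {x : ℝ} (hx : 0 ≤ x) : sin x ≤ x - x ^ 3 / 6 + x ^ 5 / 120 := by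
  have := nonneg_of_hasDerivAt_nonneg' (f := fun x => x - x ^ 3 / 6 + x ^ 5 / 120 - sin x)
    (f' := fun x => 1 - x ^ 2 / 2 + x ^ 4 / 24 - cos x) (fun y => by
      convert! ((((hasDerivAt_id y).sub ((hasDerivAt_pow 3 y).div_const 6)).add
        ((hasDerivAt_pow 5 y).div_const 120)).sub (hasDerivAt_sin y)) using 1
      norm_num; ring) (by simp)
    (fun y hy => by linarith [cos_le_taylor_four hy]) hx
  linarith

lemma taylor_six_le_cos {x : ℝ} (hx : 0 ≤ x) :
    1 - x ^ 2 / 2 + x ^ 4 / 24 - x ^ 6 / 720 ≤ cos x := by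
  have := nonneg_of_hasDerivAt_nonneg'
    (f := fun x => cos x - (1 - x ^ 2 / 2 + x ^ 4 / 24 - x ^ 6 / 720))
    (f' := fun x => x - x ^ 3 / 6 + x ^ 5 / 120 - sin x) (fun y => by
      convert! (hasDerivAt_cos y).sub (((((hasDerivAt_const y (1 : ℝ)).sub
        ((hasDerivAt_pow 2 y).div_const 2)).add
        ((hasDerivAt_pow 4 y).div_const 24)).sub ((hasDerivAt_pow 6 y).div_const 720))) using 1
      norm_num; ring) (by simp)
    (fun y hy => by linarith [sin_le_taylor_five hy]) hx
  linarith

lemma taylor_seven_le_sin {x : ℝ} (hx : 0 ≤ x) :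
    x - x ^ 3 / 6 + x ^ 5 / 120 - x ^ 7 / 5040 ≤ sin x := by
  have := nonneg_of_hasDerivAt_nonneg'
    (f := fun x => sin x - (x - x ^ 3 / 6 + x ^ 5 / 120 - x ^ 7 / 5040))
    (f' := fun x => cos x - (1 - x ^ 2 / 2 + x ^ 4 / 24 - x ^ 6 / 720)) (fun y => by
      convert! (hasDerivAt_sin y).sub (((((hasDerivAt_id y).sub
        ((hasDerivAt_pow 3 y).div_const 6)).add
        ((hasDerivAt_pow 5 y).div_const 120)).sub ((hasDerivAt_pow 7 y).div_const 5040))) using 1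
      norm_num; ring) (by simp)
    (fun y hy => by linarith [taylor_six_le_cos hy]) hx
  linarith

lemma cos_le_taylor_eight {x : ℝ} (hx : 0 ≤ x) :
    cos x ≤ 1 - x ^ 2 / 2 + x ^ 4 / 24 - x ^ 6 / 720 + x ^ 8 / 40320 := by
  have := nonneg_of_hasDerivAt_nonneg'
    (f := fun x => 1 - x ^ 2 / 2 + x ^ 4 / 24 - x ^ 6 / 720 + x ^ 8 / 40320 - cos x)
    (f' := fun x => sin x - (x - x ^ 3 / 6 + x ^ 5 / 120 - x ^ 7 / 5040)) (fun y => by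
      convert! ((((((hasDerivAt_const y (1 : ℝ)).sub
        ((hasDerivAt_pow 2 y).div_const 2)).add
        ((hasDerivAt_pow 4 y).div_const 24)).sub ((hasDerivAt_pow 6 y).div_const 720))).add
        ((hasDerivAt_pow 8 y).div_const 40320)).sub (hasDerivAt_cos y) using 1
      norm_num; ring) (by simp)
    (fun y hy => by linarith [taylor_seven_le_sin hy]) hx
  linarith

lemma sin_le_taylor_nine {x : ℝ} (hx : 0 ≤ x) :
    sin x ≤ x - x ^ 3 / 6 + x ^ 5 / 120 - x ^ 7 / 5040 + x ^ 9 / 362880 := by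
  have := nonneg_of_hasDerivAt_nonneg'
    (f := fun x => x - x ^ 3 / 6 + x ^ 5 / 120 - x ^ 7 / 5040 + x ^ 9 / 362880 - sin x)
    (f' := fun x => 1 - x ^ 2 / 2 + x ^ 4 / 24 - x ^ 6 / 720 + x ^ 8 / 40320 - cos x) (fun y => by
      convert! ((((((hasDerivAt_id y).sub
        ((hasDerivAt_pow 3 y).div_const 6)).add
        ((hasDerivAt_pow 5 y).div_const 120)).sub ((hasDerivAt_pow 7 y).div_const 5040))).add
        ((hasDerivAt_pow 9 y).div_const 362880)).sub (hasDerivAt_sin y) using 1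
      norm_num; ring) (by simp)
    (fun y hy => by linarith [cos_le_taylor_eight hy]) hx
  linarith

lemma taylor_ten_le_cos {x : ℝ} (hx : 0 ≤ x) :
    1 - x ^ 2 / 2 + x ^ 4 / 24 - x ^ 6 / 720 + x ^ 8 / 40320 - x ^ 10 / 3628800 ≤ cos x := by
  have := nonneg_of_hasDerivAt_nonneg'
    (f := fun x => cos x -
      (1 - x ^ 2 / 2 + x ^ 4 / 24 - x ^ 6 / 720 + x ^ 8 / 40320 - x ^ 10 / 3628800))
    (f' := fun x => x - x ^ 3 / 6 + x ^ 5 / 120 - x ^ 7 / 5040 + x ^ 9 / 362880 - sin x)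
    (fun y => by
      convert! (hasDerivAt_cos y).sub (((((((hasDerivAt_const y (1 : ℝ)).sub
        ((hasDerivAt_pow 2 y).div_const 2)).add
        ((hasDerivAt_pow 4 y).div_const 24)).sub ((hasDerivAt_pow 6 y).div_const 720))).add
        ((hasDerivAt_pow 8 y).div_const 40320)).sub
        ((hasDerivAt_pow 10 y).div_const 3628800)) using 1
      norm_num; ring) (by simp)
    (fun y hy => by linarith [sin_le_taylor_nine hy]) hx
  linarith

lemma one_sub_cos_mul_le {y : ℝ} (hy : 0 ≤ y) (hy' : y ≤ 11 / 5) :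
    (1 - cos y) * (4 + y ^ 4 / 180) ≤ y ^ 2 + y * sin y := by
  have hc : 1 - cos y ≤
      y ^ 2 / 2 - y ^ 4 / 24 + y ^ 6 / 720 - y ^ 8 / 40320 + y ^ 10 / 3628800 := by
    linarith [taylor_ten_le_cos hy]
  have h1 := mul_le_mul_of_nonneg_right hc (show 0 ≤ 4 + y ^ 4 / 180 by positivity)
  have h2 := mul_le_mul_of_nonneg_left (taylor_seven_le_sin hy) hy
  have hy2 : y ^ 2 ≤ 5 := by nlinarith
  have h3 : 0 ≤ y ^ 8 * (5 - y ^ 2) := mul_nonneg (by positivity) (by linarith)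
  have h4 : 0 ≤ y ^ 12 * (5 - y ^ 2) := mul_nonneg (by positivity) (by linarith)
  have h5 : 0 ≤ y ^ 8 := by positivity
  have h6 : 0 ≤ y ^ 12 := by positivity
  nlinarith

lemma sinc_pos {x : ℝ} (hx : 0 ≤ x) (hx' : x ≤ 11 / 10) : 0 < sinc x := by
  rcases hx.eq_or_lt with rfl | hx
  · simp
  · rw [sinc_of_ne_zero hx.ne']
    exact div_pos (sin_pos_of_pos_of_lt_pi hx (by linarith [pi_gt_three])) hx

lemma hasDerivAt_sinc {x : ℝ} (hx : 0 < x) :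
    HasDerivAt sinc ((cos x * x - sin x) / x ^ 2) x := by
  have h := (hasDerivAt_sin x).div (hasDerivAt_id x) hx.ne'
  simp only [id, mul_one] at h
  refine h.congr_of_eventuallyEq ?_
  filter_upwards [lt_mem_nhds hx] with y hy
  simp [sinc_of_ne_zero (ne_of_gt hy)]

lemma log_sinc_deriv_bound {x : ℝ} (hx : x ∈ Set.Icc (0 : ℝ) (11 / 10)) :
    0 ≤ 1 - cos x / sinc x + 2 * log (sinc x) - x ^ 4 / 90 := by
  refine nonneg_of_hasDerivAt_nonneg (c := 11 / 10)
    (f := fun x => 1 - cos x / sinc x + 2 * log (sinc x) - x ^ 4 / 90)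
    (f' := fun x => (4 * x ^ 2 + 2 * x * sin (2 * x) -
      (1 - cos (2 * x)) * (4 + (2 * x) ^ 4 / 180)) / (4 * x * sin x ^ 2))
    ?_ ?_ ?_ ?_ hx
  · intro y hy
    have := sinc_pos hy.1 hy.2
    have h := continuous_sinc.continuousAt (x := y)
    refine ContinuousAt.continuousWithinAt ?_
    fun_prop (disch := exact this.ne')
  · intro y hy
    have hp := sinc_pos hy.1.le hy.2.le
    have hs : 0 < sin y := sin_pos_of_pos_of_lt_pi hy.1 (by linarith [pi_gt_three, hy.2])
    have hy0 := hy.1.ne'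
    have h := hasDerivAt_sinc hy.1
    convert! (((hasDerivAt_const y (1 : ℝ)).sub ((hasDerivAt_cos y).div h hp.ne')).add
      ((h.log hp.ne').const_mul 2)).sub ((hasDerivAt_pow 4 y).div_const 90) using 1
    rw [sinc_of_ne_zero hy0, sin_two_mul, cos_two_mul, cos_sq']
    field_simp
    have := cos_sq' y
    ring_nf
    rw [this]
    ring
  · simp
  · intro y hy
    have hs : 0 < sin y := sin_pos_of_pos_of_lt_pi hy.1 (by linarith [pi_gt_three, hy.2])
    have := one_sub_cos_mul_le (y := 2 * y) (by linarith [hy.1]) (by linarith [hy.2])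
    refine div_nonneg (by linarith) (mul_nonneg (by linarith [hy.1]) (sq_nonneg _))

lemma log_sinc_div_sq_antitoneOn :
    AntitoneOn (fun x => log (sinc x) / x ^ 2 + x ^ 2 / 180) (Set.Ioc 0 (11 / 10)) := by
  have hd : ∀ y ∈ Set.Ioc (0 : ℝ) (11 / 10),
      HasDerivAt (fun x => log (sinc x) / x ^ 2 + x ^ 2 / 180)
        (-(1 - cos y / sinc y + 2 * log (sinc y) - y ^ 4 / 90) / y ^ 3) y := by
    intro y hy
    have hp := sinc_pos hy.1.le hy.2
    have hs : 0 < sin y := sin_pos_of_pos_of_lt_pi hy.1 (by linarith [pi_gt_three, hy.2])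
    have hy0 := hy.1.ne'
    convert! (((hasDerivAt_sinc hy.1).log hp.ne').div (hasDerivAt_pow 2 y)
      (pow_ne_zero 2 hy0)).add ((hasDerivAt_pow 2 y).div_const 180) using 1
    generalize log (sinc y) = L
    rw [sinc_of_ne_zero hy0]
    field_simp
    ring
  refine antitoneOn_of_deriv_nonpos (convex_Ioc _ _)
    (fun y hy => (hd y hy).continuousAt.continuousWithinAt) ?_ ?_ <;> rw [interior_Ioc]
  · exact fun y hy => (hd y ⟨hy.1, hy.2.le⟩).differentiableAt.differentiableWithinAt
  · intro y hy
    rw [(hd y ⟨hy.1, hy.2.le⟩).deriv]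
    have := log_sinc_deriv_bound ⟨hy.1.le, hy.2.le⟩
    exact div_nonpos_of_nonpos_of_nonneg (by linarith) (pow_nonneg hy.1.le 3)

lemma sinc_pow_mul_le {n : ℕ} (hn : 0 < n) {s : ℝ} (hs : 0 < s) (hs' : s / √n ≤ 11 / 10) :
    sinc (s / √n) ^ n * (1 + s ^ 4 / (180 * n * (n + 1))) ≤
      sinc (s / √(n + 1 : ℕ)) ^ (n + 1) := by
  have hn' : (0 : ℝ) < n := by exact_mod_cast hn
  have hy : 0 < s / √n := by positivity
  have hx : 0 < s / √(n + 1 : ℕ) := by positivity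
  have hxy : s / √(n + 1 : ℕ) ≤ s / √n := by
    gcongr
    simp
  have h := log_sinc_div_sq_antitoneOn ⟨hx, hxy.trans hs'⟩ ⟨hy, hs'⟩ hxy
  beta_reduce at h
  have hpy := sinc_pos hy.le hs'
  have hpx := sinc_pos hx.le (hxy.trans hs')
  have hle : n * log (sinc (s / √n)) + s ^ 4 / (180 * n * (n + 1)) ≤
      (n + 1) * log (sinc (s / √(n + 1 : ℕ))) := by
    generalize log (sinc (s / √n)) = a at *
    generalize log (sinc (s / √(n + 1 : ℕ))) = b at *
    have h := mul_le_mul_of_nonneg_left h (sq_nonneg s)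
    simp only [div_pow, Real.sq_sqrt (Nat.cast_nonneg _)] at h
    push_cast at h
    field_simp at h ⊢
    nlinarith
  calc sinc (s / √n) ^ n * (1 + s ^ 4 / (180 * n * (n + 1)))
      ≤ exp (n * log (sinc (s / √n))) * exp (s ^ 4 / (180 * n * (n + 1))) := by
        rw [exp_nat_mul, exp_log hpy]
        gcongr
        linarith [add_one_le_exp (s ^ 4 / (180 * n * (n + 1)))]
    _ ≤ exp ((n + 1 : ℕ) * log (sinc (s / √(n + 1 : ℕ)))) := by
        rw [← exp_add]
        push_cast at hle ⊢
        exact exp_le_exp.2 hle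
    _ = _ := by rw [exp_nat_mul, exp_log hpx]

lemma exp_mul_one_sub_le_sinc {x : ℝ} (hx : 0 ≤ x) :
    exp (-(x ^ 2 / 6)) * (1 - x ^ 4 / 36) ≤ |sinc x| := by
  rcases le_total (x ^ 2) 6 with h | h
  · have h1 : 1 - x ^ 2 / 6 ≤ sinc x := by
      rcases hx.eq_or_lt with rfl | hx
      · simp
      · rw [sinc_of_ne_zero hx.ne', le_div_iff₀ hx]
        linarith [sin_gt_sub_cube hx]
    refine le_trans ?_ (h1.trans (le_abs_self _))
    have h2 : exp (-(x ^ 2 / 6)) * (1 + x ^ 2 / 6) ≤ 1 := by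
      rw [exp_neg, inv_mul_le_one₀ (exp_pos _)]
      linarith [add_one_le_exp (x ^ 2 / 6)]
    nlinarith [mul_le_mul_of_nonneg_right h2 (show 0 ≤ 1 - x ^ 2 / 6 by linarith)]
  · refine le_trans (mul_nonpos_of_nonneg_of_nonpos (exp_pos _).le ?_) (abs_nonneg _)
    nlinarith

lemma exp_mul_one_sub_le_sinc_pow {n : ℕ} (hn : 0 < n) {s : ℝ} (hs : 0 ≤ s) :
    exp (-(s ^ 2 / 6)) * (1 - s ^ 4 / (36 * n)) ≤ |sinc (s / √n)| ^ n := by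
  have hn' : (0 : ℝ) < n := by exact_mod_cast hn
  rcases le_total (1 - s ^ 4 / (36 * n)) 0 with h0 | h0
  · exact (mul_nonpos_of_nonneg_of_nonpos (exp_pos _).le h0).trans (by positivity)
  have hsq : (s / √n) ^ 4 = s ^ 4 / n ^ 2 := by
    rw [div_pow, show √(n : ℝ) ^ 4 = (√n ^ 2) ^ 2 by ring, Real.sq_sqrt hn'.le]
  have hn1 : (1 : ℝ) ≤ n := by exact_mod_cast hn
  have hb : s ^ 4 / n ^ 2 / 36 ≤ s ^ 4 / (36 * n) := by
    rw [div_div, mul_comm _ (36 : ℝ)]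
    gcongr
    nlinarith
  have hB : 1 + (n : ℝ) * (-(s ^ 4 / n ^ 2 / 36)) ≤ (1 + -(s ^ 4 / n ^ 2 / 36)) ^ n :=
    one_add_mul_le_pow (by linarith) n
  calc exp (-(s ^ 2 / 6)) * (1 - s ^ 4 / (36 * n))
      ≤ exp (-(s ^ 2 / 6)) * (1 - s ^ 4 / n ^ 2 / 36) ^ n := by
        gcongr
        convert! hB using 1
        field_simp
        ring
    _ = (exp (-((s / √n) ^ 2 / 6)) * (1 - (s / √n) ^ 4 / 36)) ^ n := by
        rw [mul_pow, ← exp_nat_mul, hsq, div_pow, Real.sq_sqrt hn'.le]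
        congr 2
        field_simp
    _ ≤ _ := by
        gcongr
        · exact mul_nonneg (exp_pos _).le (by rw [hsq]; linarith)
        · exact exp_mul_one_sub_le_sinc (by positivity)

/-- The function `t ↦ t ^ (-n)` cut off below `11 / 10`. -/
noncomputable def invPowTail (n : ℕ) : ℝ → ℝ :=
  Set.indicator (Set.Ioi (11 / 10)) fun t => t ^ (-(n : ℝ))

lemma invPowTail_nonneg (n : ℕ) (t : ℝ) : 0 ≤ invPowTail n t :=
  Set.indicator_nonneg (fun t (ht : 11 / 10 < t) => rpow_nonneg (by linarith) _) t

lemma abs_sinc_pow_le_invPowTail (n : ℕ) {t : ℝ} (ht : 11 / 10 < t) :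
    |sinc t| ^ n ≤ invPowTail n t := by
  have ht0 : 0 < t := by linarith
  rw [invPowTail, Set.indicator_of_mem (Set.mem_Ioi.2 ht), rpow_neg ht0.le, rpow_natCast,
    ← inv_pow, sinc_of_ne_zero ht0.ne', abs_div, abs_of_pos ht0, div_eq_mul_inv]
  gcongr
  exact mul_le_of_le_one_left (by positivity) (abs_sin_le_one t)

lemma sinc_pow_add_invPowTail_nonneg (n : ℕ) {t : ℝ} (ht : 0 ≤ t) :
    0 ≤ sinc t ^ n + invPowTail n t := by
  rcases le_or_gt t (11 / 10) with h | h
  · exact add_nonneg (pow_nonneg (sinc_pos ht h).le n) (invPowTail_nonneg n t)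
  · have := abs_sinc_pow_le_invPowTail n h
    rw [← abs_pow] at this
    linarith [neg_abs_le (sinc t ^ n)]

lemma sinc_pow_sub_invPowTail_nonpos (n : ℕ) {t : ℝ} (ht : 11 / 10 < t) :
    sinc t ^ n - invPowTail n t ≤ 0 := by
  have := abs_sinc_pow_le_invPowTail n ht
  rw [← abs_pow] at this
  linarith [le_abs_self (sinc t ^ n)]

lemma sinc_pow_diff_nonneg {n : ℕ} (hn : 0 < n) {s : ℝ} (hs : 0 < s) :
    sinc (s / √n) ^ n - invPowTail n (s / √n) ≤
      sinc (s / √(n + 1 : ℕ)) ^ (n + 1) + invPowTail (n + 1) (s / √(n + 1 : ℕ)) := by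
  rcases le_or_gt (s / √n) (11 / 10) with h | h
  · have h1 := sinc_pow_mul_le hn hs h
    have h2 : 0 ≤ sinc (s / √n) ^ n * (s ^ 4 / (180 * n * (n + 1))) :=
      mul_nonneg (pow_nonneg (sinc_pos (by positivity) h).le n) (by positivity)
    linarith [invPowTail_nonneg n (s / √n), invPowTail_nonneg (n + 1) (s / √(n + 1 : ℕ))]
  · exact (sinc_pow_sub_invPowTail_nonpos n h).trans
      (sinc_pow_add_invPowTail_nonneg (n + 1) (by positivity))

lemma le_sinc_pow_diff {n : ℕ} (hn : 30 ≤ n) {s : ℝ} (hs : 0 < s) :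
    s ^ 4 / (180 * n * (n + 1)) * (exp (-(s ^ 2 / 6)) * (1 - s ^ 4 / (36 * n))) ≤
      (sinc (s / √(n + 1 : ℕ)) ^ (n + 1) + invPowTail (n + 1) (s / √(n + 1 : ℕ))) -
      (sinc (s / √n) ^ n - invPowTail n (s / √n)) := by
  have hn' : (30 : ℝ) ≤ n := by exact_mod_cast hn
  rcases le_or_gt (s / √n) (11 / 10) with h | h
  · have h1 := sinc_pow_mul_le (by lia) hs h
    have h2 := exp_mul_one_sub_le_sinc_pow (n := n) (by lia) hs.le
    rw [abs_of_pos (sinc_pos (by positivity) h)] at h2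
    have h3 := mul_le_mul_of_nonneg_left h2
      (show 0 ≤ s ^ 4 / (180 * n * (n + 1)) by positivity)
    linarith [invPowTail_nonneg n (s / √n), invPowTail_nonneg (n + 1) (s / √(n + 1 : ℕ))]
  · have h1 := sinc_pow_diff_nonneg (n := n) (by lia) hs
    refine (mul_nonpos_of_nonneg_of_nonpos (by positivity)
      (mul_nonpos_of_nonneg_of_nonpos (exp_pos _).le ?_)).trans (sub_nonneg.2 h1)
    rw [lt_div_iff₀ (by positivity)] at h
    have h4 : (11 / 10 * √n) ^ 4 ≤ s ^ 4 := by gcongr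
    rw [mul_pow, show √(n : ℝ) ^ 4 = (√n ^ 2) ^ 2 by ring, Real.sq_sqrt (by positivity)] at h4
    rw [sub_nonpos, one_le_div (by positivity)]
    nlinarith

lemma integrable_invPowTail {n : ℕ} (hn : 2 ≤ n) : Integrable (invPowTail n) := by
  have hn' : (2 : ℝ) ≤ n := by exact_mod_cast hn
  exact (integrable_indicator_iff measurableSet_Ioi).2
    (integrableOn_Ioi_rpow_of_lt (by linarith) (by norm_num))

lemma integral_invPowTail {n : ℕ} (hn : 2 ≤ n) :
    ∫ t in Set.Ioi (0 : ℝ), invPowTail n t = (11 / 10) / (n - 1) * (11 / 10) ^ (-(n : ℤ)) := by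
  have hn' : (2 : ℝ) ≤ n := by exact_mod_cast hn
  rw [invPowTail, setIntegral_indicator measurableSet_Ioi, Set.Ioi_inter_Ioi,
    max_eq_right (by norm_num), integral_Ioi_rpow_of_lt (by linarith) (by norm_num),
    rpow_add_one (by norm_num), ← rpow_intCast]
  have : (n : ℝ) - 1 ≠ 0 := by linarith
  have : -(n : ℝ) + 1 ≠ 0 := by linarith
  push_cast
  field_simp
  ring

lemma integrableOn_sinc_pow {n : ℕ} (hn : 2 ≤ n) :
    IntegrableOn (fun t => sinc t ^ n) (Set.Ioi 0) := by
  have hb : IntegrableOn (fun t => Set.indicator (Set.Ioc 0 (11 / 10)) (fun _ => (1 : ℝ)) t +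
      invPowTail n t) (Set.Ioi 0) :=
    (((integrable_indicator_iff measurableSet_Ioc).2 (by simp)).add
      (integrable_invPowTail hn)).integrableOn
  refine hb.mono' (continuous_sinc.pow n).aestronglyMeasurable.restrict
    ((ae_restrict_mem measurableSet_Ioi).mono fun t (ht : 0 < t) => ?_)
  rw [norm_pow, norm_eq_abs]
  rcases le_or_gt t (11 / 10) with h | h
  · rw [Set.indicator_of_mem (by exact ⟨ht, h⟩)]
    linarith [pow_le_one₀ (n := n) (abs_nonneg _) (abs_sinc_le_one t), invPowTail_nonneg n t]
  · linarith [abs_sinc_pow_le_invPowTail n h,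
      Set.indicator_nonneg (s := Set.Ioc (0 : ℝ) (11 / 10)) (f := fun _ => (1 : ℝ))
        (fun _ _ => zero_le_one) t]

lemma integral_comp_div_sqrt (g : ℝ → ℝ) {n : ℕ} (hn : 0 < n) :
    ∫ s in Set.Ioi (0 : ℝ), g (s / √n) = √n * ∫ t in Set.Ioi (0 : ℝ), g t := by
  have h : (0 : ℝ) < (√n)⁻¹ := by positivity
  have := integral_comp_mul_right_Ioi g 0 h
  simpa only [div_eq_mul_inv, zero_mul, inv_inv, smul_eq_mul] using this

lemma integrableOn_comp_div_sqrt {g : ℝ → ℝ} (hg : IntegrableOn g (Set.Ioi 0)) {n : ℕ}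
    (hn : 0 < n) : IntegrableOn (fun s => g (s / √n)) (Set.Ioi 0) := by
  have h : (0 : ℝ) < (√n)⁻¹ := by positivity
  simp only [div_eq_inv_mul]
  rw [integrableOn_Ioi_comp_mul_left_iff g 0 h]
  simpa using hg

lemma I_eq_integral_sinc (n : ℕ) :
    I n = 2 / π * (√n * ∫ t in Set.Ioi (0 : ℝ), sinc t ^ n) := by
  have : ∫ t in Set.Ioi (0 : ℝ), (sin t / t) ^ n = ∫ t in Set.Ioi (0 : ℝ), sinc t ^ n :=
    setIntegral_congr_fun measurableSet_Ioi fun t (ht : 0 < t) => by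
      simp [sinc_of_ne_zero ht.ne']
  rw [I, this]
  ring

lemma le_I_succ_sub_I {n : ℕ} (hn : 2 ≤ n) {p : ℝ → ℝ} (hp : IntegrableOn p (Set.Ioi 0))
    (h : ∀ s, 0 < s → p s ≤
      (sinc (s / √(n + 1 : ℕ)) ^ (n + 1) + invPowTail (n + 1) (s / √(n + 1 : ℕ))) -
      (sinc (s / √n) ^ n - invPowTail n (s / √n))) :
    2 / π * ((∫ s in Set.Ioi 0, p s) -
      (√(n + 1 : ℕ) * ((11 / 10) / n * (11 / 10) ^ (-((n + 1 : ℕ) : ℤ))) +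
        √n * ((11 / 10) / (n - 1) * (11 / 10) ^ (-(n : ℤ))))) ≤ I (n + 1) - I n := by
  have i1 := integrableOn_sinc_pow hn
  have i2 := integrableOn_sinc_pow (n := n + 1) (by lia)
  have j1 := (integrable_invPowTail hn).integrableOn (s := Set.Ioi 0)
  have j2 := (integrable_invPowTail (n := n + 1) (by lia)).integrableOn (s := Set.Ioi 0)
  have k1 := integrableOn_comp_div_sqrt (i1.sub j1) (n := n) (by lia)
  have k2 := integrableOn_comp_div_sqrt (i2.add j2) (n := n + 1) (by lia)
  have hle := setIntegral_mono_on hp (k2.sub k1) measurableSet_Ioi (fun s hs => h s hs)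
  have e : ∫ s in Set.Ioi (0 : ℝ),
      ((sinc (s / √(n + 1 : ℕ)) ^ (n + 1) + invPowTail (n + 1) (s / √(n + 1 : ℕ))) -
      (sinc (s / √n) ^ n - invPowTail n (s / √n))) =
      √(n + 1 : ℕ) * ((∫ t in Set.Ioi (0 : ℝ), sinc t ^ (n + 1)) +
        ∫ t in Set.Ioi (0 : ℝ), invPowTail (n + 1) t) -
      √n * ((∫ t in Set.Ioi (0 : ℝ), sinc t ^ n) - ∫ t in Set.Ioi (0 : ℝ), invPowTail n t) := by
    rw [← integral_add i2 j2, ← integral_sub i1 j1, ← integral_comp_div_sqrt _ (by lia),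
      ← integral_comp_div_sqrt _ (by lia)]
    exact integral_sub k2 k1
  have hle := hle.trans_eq e
  rw [integral_invPowTail hn, integral_invPowTail (by lia)] at hle
  rw [I_eq_integral_sinc, I_eq_integral_sinc, ← mul_sub]
  refine mul_le_mul_of_nonneg_left ?_ (by positivity)
  push_cast at hle ⊢
  rw [add_sub_cancel_right] at hle
  linarith

lemma integral_pow_mul_exp_neg_sq_div_six (k : ℕ) :
    ∫ s in Set.Ioi (0 : ℝ), s ^ (2 * k) * exp (-(s ^ 2 / 6)) =
      6 ^ k * (2 * k - 1 : ℕ).doubleFactorial / 2 ^ k * √(6 * π) / 2 := by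
  have h := integral_rpow_mul_exp_neg_mul_rpow (p := 2) (q := (2 * k : ℕ)) (b := 1 / 6)
    (by norm_num) (by have : (0 : ℝ) ≤ (2 * k : ℕ) := by positivity
                      linarith) (by norm_num)
  rw [show (((2 * k : ℕ) : ℝ) + 1) / 2 = k + 1 / 2 by push_cast; ring, Gamma_nat_add_half,
    show -(((2 * k : ℕ) : ℝ) + 1) / 2 = -(k + 1 / 2) by push_cast; ring, one_div (6 : ℝ),
    rpow_neg (by norm_num), inv_rpow (by norm_num), inv_inv, rpow_add (by norm_num),
    ← sqrt_eq_rpow, rpow_natCast] at h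
  simp only [rpow_natCast, rpow_ofNat] at h
  rw [Real.sqrt_mul (by norm_num)]
  calc _ = _ := by
        congr! 4 with s
        ring
    _ = _ := h
    _ = _ := by ring

lemma integrableOn_pow_mul_exp_neg_sq_div_six (k : ℕ) :
    IntegrableOn (fun s : ℝ => s ^ k * exp (-(s ^ 2 / 6))) (Set.Ioi 0) := by
  have h := integrableOn_rpow_mul_exp_neg_mul_sq (b := 1 / 6) (by norm_num) (s := (k : ℝ))
    (by have : (0 : ℝ) ≤ k := by positivity
        linarith)
  simp only [rpow_natCast] at h
  convert! h using 4
  ring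

lemma sqrt_six_mul_pi_div_pi : √(6 * π) / π = √(6 / π) := by
  rw [eq_comm, Real.sqrt_eq_iff_mul_self_eq (by positivity) (by positivity), div_mul_div_comm,
    Real.mul_self_sqrt (by positivity)]
  field_simp

lemma tail_integrals_le {n : ℕ} (hn : 3 ≤ n) :
    √(n + 1 : ℕ) * ((11 / 10) / n * (11 / 10) ^ (-((n + 1 : ℕ) : ℤ))) +
        √n * ((11 / 10) / (n - 1) * (11 / 10) ^ (-(n : ℤ))) ≤
      2 * (11 / 10 : ℝ) ^ (-(n : ℤ)) := by
  have hn' : (3 : ℝ) ≤ n := by exact_mod_cast hn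
  have h1 : √(n + 1 : ℕ) / n ≤ 2 / 3 := by
    rw [div_le_iff₀ (by linarith), Real.sqrt_le_left (by linarith)]
    push_cast
    nlinarith
  have h2 : √n / (n - 1 : ℝ) ≤ 1 := by
    rw [div_le_one (by linarith), Real.sqrt_le_left (by linarith)]
    nlinarith
  have h3 : (11 / 10 : ℝ) ^ (-((n + 1 : ℕ) : ℤ)) = (11 / 10 : ℝ) ^ (-(n : ℤ)) * (10 / 11) := by
    rw [Nat.cast_add, neg_add, zpow_add₀ (by norm_num)]
    norm_num
  rw [h3]
  have h4 : 0 < (11 / 10 : ℝ) ^ (-(n : ℤ)) := by positivity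
  calc _ = (√(n + 1 : ℕ) / n + 11 / 10 * (√n / (n - 1 : ℝ))) * (11 / 10 : ℝ) ^ (-(n : ℤ)) := by
        ring
    _ ≤ _ := by
        gcongr
        linarith

lemma sqrt_six_div_pi_le : √(6 / π) ≤ 7 / 5 := by
  rw [Real.sqrt_le_left (by norm_num), div_le_iff₀ pi_pos]
  linarith [pi_gt_d2]

lemma I_succ_sub_I_ge_neg {n : ℕ} (hn : 3 ≤ n) :
    -(2 * (11 / 10 : ℝ) ^ (-(n : ℤ))) ≤ I (n + 1) - I n := by
  have h := le_I_succ_sub_I (n := n) (by lia) (p := fun _ => 0) (by simp)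
    fun s hs => sub_nonneg.2 (sinc_pow_diff_nonneg (by lia) hs)
  have h1 := tail_integrals_le hn
  have h2 : 2 / π ≤ 1 := by rw [div_le_one pi_pos]; linarith [pi_gt_three]
  have h3 : 0 < (11 / 10 : ℝ) ^ (-(n : ℤ)) := by positivity
  simp only [integral_zero, zero_sub] at h
  refine le_trans ?_ h
  rw [mul_neg, neg_le_neg_iff]
  calc _ ≤ 2 / π * (2 * (11 / 10 : ℝ) ^ (-(n : ℤ))) := by gcongr
    _ ≤ _ := mul_le_of_le_one_left (by positivity) h2

lemma I_succ_sub_I_ge {n : ℕ} (hn : 30 ≤ n) :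
    √(6 / π) * (3 / (20 * n * (n + 1))) * (1 - 35 / (4 * n)) -
      2 * (11 / 10 : ℝ) ^ (-(n : ℤ)) ≤ I (n + 1) - I n := by
  have hn' : (30 : ℝ) ≤ n := by exact_mod_cast hn
  have i4 := integrableOn_pow_mul_exp_neg_sq_div_six 4
  have i8 := integrableOn_pow_mul_exp_neg_sq_div_six 8
  have e4 := integral_pow_mul_exp_neg_sq_div_six 2
  have e8 := integral_pow_mul_exp_neg_sq_div_six 4
  norm_num [Nat.doubleFactorial] at e4 e8
  have j4 := i4.const_mul (1 / (180 * n * (n + 1) : ℝ))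
  have j8 := i8.const_mul (1 / (180 * n * (n + 1) * (36 * n) : ℝ))
  have h := le_I_succ_sub_I (n := n) (by lia) (j4.sub j8) fun s hs => by
    refine le_trans (le_of_eq ?_) (le_sinc_pow_diff hn hs)
    simp only [Pi.sub_apply]
    field_simp
  have hI := integral_sub j4 j8
  rw [integral_const_mul, integral_const_mul, e4, e8] at hI
  simp only [Pi.sub_apply] at h
  rw [hI] at h
  have h1 := tail_integrals_le (n := n) (by lia)
  have h2 : 2 / π ≤ 1 := by rw [div_le_one pi_pos]; linarith [pi_gt_three]
  have h3 : 0 < (11 / 10 : ℝ) ^ (-(n : ℤ)) := by positivity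
  refine le_trans ?_ h
  rw [mul_sub (2 / π)]
  refine sub_le_sub (le_of_eq ?_) ?_
  · rw [← sqrt_six_mul_pi_div_pi, Real.sqrt_mul (by norm_num)]
    field_simp
    ring
  · calc _ ≤ 2 / π * (2 * (11 / 10 : ℝ) ^ (-(n : ℤ))) := by gcongr
      _ ≤ _ := mul_le_of_le_one_left (by positivity) h2

/-- Explicit lower bound for `I (n+1) - I n` for `n ≥ 3`. -/
theorem I_succ_sub_I_gt (n : ℕ) (hn : 3 ≤ n) :
    I (n + 1) - I n >
      Real.sqrt (6 / Real.pi) * (3 / (20 * (n : ℝ) * ((n : ℝ) + 1)))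
        - 4 * (1.1 : ℝ) ^ (-(n : ℤ))
        - 0.50344 * (n : ℝ) ^ (-(5 : ℝ) / 2)
        - 10 * Real.exp (-(n : ℝ) / 6) := by
  have hn' : (3 : ℝ) ≤ n := by exact_mod_cast hn
  have hn0 : (0 : ℝ) < n := by linarith
  rw [show (1.1 : ℝ) = 11 / 10 by norm_num]
  have he := exp_pos (-(n : ℝ) / 6)
  have hK := sqrt_six_div_pi_le
  have hc : 0 < (11 / 10 : ℝ) ^ (-(n : ℤ)) := by positivity
  have hr : 0 < (n : ℝ) ^ (-(5 : ℝ) / 2) := by positivity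
  rcases lt_or_ge n 30 with h30 | h30
  · have h := I_succ_sub_I_ge_neg hn
    have h1 : (11 / 10 : ℝ) ^ (-(30 : ℤ)) ≤ (11 / 10 : ℝ) ^ (-(n : ℤ)) :=
      zpow_le_zpow_right₀ (by norm_num) (by lia)
    have h2 : (1 / 20 : ℝ) ≤ (11 / 10 : ℝ) ^ (-(30 : ℤ)) := by norm_num
    have h3 : 3 / (20 * (n : ℝ) * (n + 1)) ≤ 1 / 80 := by
      rw [div_le_div_iff₀ (by positivity) (by norm_num)]
      nlinarith
    have h4 : √(6 / π) * (3 / (20 * (n : ℝ) * (n + 1))) ≤ 7 / 5 * (1 / 80) := by gcongr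
    linarith
  · have h := I_succ_sub_I_ge h30
    have h30' : (30 : ℝ) ≤ n := by exact_mod_cast h30
    have hs : (5 : ℝ) ≤ √n := Real.le_sqrt_of_sq_le (by linarith)
    have hss := Real.mul_self_sqrt hn0.le
    have hpow : (n : ℝ) ^ (-(5 : ℝ) / 2) = 1 / (n ^ 2 * √n) := by
      rw [show -(5 : ℝ) / 2 = -(2 + 1 / 2) by norm_num, rpow_neg hn0.le, rpow_add hn0,
        ← sqrt_eq_rpow, rpow_ofNat, one_div]
    have h5 : √(6 / π) * (3 / (20 * n * (n + 1)) * (35 / (4 * n))) ≤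
        0.50344 * (n : ℝ) ^ (-(5 : ℝ) / 2) := by
      calc _ ≤ 7 / 5 * (3 / (20 * n * (n + 1)) * (35 / (4 * (n : ℝ)))) := by gcongr
        _ ≤ _ := by
          rw [hpow]
          have : 0 < √(n : ℝ) := by positivity
          have : (7 / 5 * (3 * 35) * √n : ℝ) ≤ 0.50344 * (80 * (n + 1)) := by nlinarith
          calc _ = (7 / 5 * (3 * 35) * √n : ℝ) / (80 * (n + 1) * n ^ 2 * √n) := by
                field_simp
                ring
            _ ≤ 0.50344 * (80 * (n + 1)) / (80 * (n + 1) * n ^ 2 * √n) := by gcongr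
            _ = _ := by field_simp
    linarith
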